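/- Let δ > 0 be sufficiently small, let ζ, φ ∈ X_δ, let ρ₀ be a bounded measurable axisymmetric function on ℝ³, even in x₃, supported in B̄₁, and let k ∈ C²(ℝ). Then the function F₃(ζ,φ)(x) = L⁻¹[ (ρ₀ ∘ g_ζ⁻¹) · (k ∘ φ ∘ g_ζ⁻¹) ](g_ζ(x)), x ∈ B̄₁, belongs to X, and there is a constant C > 0 depending only on ‖ρ₀‖_{L∞}, k and δ such that ‖F₃(ζ,φ)‖_X ≤ C. -/

import Mathlib

noncomputable section

open MeasureTheory Metric Set Filter

/-- ℝ³ with the Euclidean norm. -/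
abbrev E3 := EuclideanSpace ℝ (Fin 3)
/-- ℝ⁵ with the Euclidean norm. -/
abbrev E5 := EuclideanSpace ℝ (Fin 5)

/-- Build a vector of ℝ³ from its coordinates. -/
def mk3 (a b c : ℝ) : E3 := (WithLp.equiv 2 (Fin 3 → ℝ)).symm ![a, b, c]
/-- Build a vector of ℝ⁵ from its coordinates. -/
def mk5 (a b c d e : ℝ) : E5 := (WithLp.equiv 2 (Fin 5 → ℝ)).symm ![a, b, c, d, e]

/-- The cylindrical radius r = √(x₁² + x₂²). -/
def cylRad (x : E3) : ℝ := Real.sqrt ((x 0)^2 + (x 1)^2)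

/-- The reflection (x₁, x₂, x₃) ↦ (x₁, x₂, −x₃). -/
def reflect3 (x : E3) : E3 := mk3 (x 0) (x 1) (-(x 2))

/-- Axisymmetric: a function of (r, x₃) only. -/
def Axisym (f : E3 → ℝ) : Prop := ∃ F : ℝ → ℝ → ℝ, ∀ x, f x = F (cylRad x) (x 2)

/-- Even in x₃. -/
def EvenZ (f : E3 → ℝ) : Prop := ∀ x, f (reflect3 x) = f x

/-- Five-dimensional extension of an axisymmetric function on ℝ³. -/
def tilde (f : E3 → ℝ) (y : E5) : ℝ :=
  f (mk3 (Real.sqrt ((y 0)^2 + (y 1)^2 + (y 2)^2 + (y 3)^2)) 0 (y 4))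

/-- The embedding (x₁,x₂,x₃) ↦ (x₁,x₂,0,0,x₃) of ℝ³ into ℝ⁵. -/
def emb (x : E3) : E5 := mk5 (x 0) (x 1) 0 0 (x 2)

/-- The operator L⁻¹, given by
(L⁻¹f)(x) = C₅ (x₁²+x₂²) ∫_{ℝ⁵} |(x₁,x₂,0,0,x₃) − y|⁻³ f̃(y) dy. -/
def Linv (C₅ : ℝ) (f : E3 → ℝ) (x : E3) : ℝ :=
  C₅ * ((x 0)^2 + (x 1)^2) * ∫ y : E5, (‖emb x - y‖ ^ 3)⁻¹ * tilde f y

/-- The gradient of a function on the closed unit ball B̄₁ ⊂ ℝ³. -/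
def gradB (f : E3 → ℝ) (x : E3) : E3 →L[ℝ] ℝ :=
  fderivWithin ℝ f (closedBall (0:E3) 1) x

/-- Membership in the space X: C¹ on B̄₁, axisymmetric, even in x₃, vanishing at the
origin, and with finite norm ‖f‖_X = sup_{0<|x|≤1} |∇f(x)|/|x|. -/
def InX (f : E3 → ℝ) : Prop :=
  ContDiffOn ℝ 1 f (closedBall (0:E3) 1) ∧
  (∃ F : ℝ → ℝ → ℝ, ∀ x ∈ closedBall (0:E3) 1, f x = F (cylRad x) (x 2)) ∧
  (∀ x ∈ closedBall (0:E3) 1, f (reflect3 x) = f x) ∧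
  f 0 = 0 ∧
  (∃ M : ℝ, ∀ x ∈ closedBall (0:E3) 1, ‖gradB f x‖ ≤ M * ‖x‖)

/-- ‖f‖_X ≤ M, expressed pointwise: |∇f(x)| ≤ M|x| on B̄₁. -/
def XnormLe (f : E3 → ℝ) (M : ℝ) : Prop :=
  ∀ x ∈ closedBall (0:E3) 1, ‖gradB f x‖ ≤ M * ‖x‖

/-- Membership in X_δ, for a function extended to all of ℝ³ preserving axisymmetry,
evenness in x₃ and the X-bound ‖∇ζ(x)‖ ≤ δ|x|. -/
def InXext (δ : ℝ) (ζ : E3 → ℝ) : Prop :=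
  ContDiff ℝ 1 ζ ∧ Axisym ζ ∧ EvenZ ζ ∧ ζ 0 = 0 ∧ ∀ x : E3, ‖fderiv ℝ ζ x‖ ≤ δ * ‖x‖

/-- The deformation g_ζ(x) = x (1 + ζ(x)/|x|²). -/
def gdef (ζ : E3 → ℝ) (x : E3) : E3 := (1 + ζ x / ‖x‖^2) • x

/-- The inverse deformation g_ζ⁻¹. -/
def ginv (ζ : E3 → ℝ) : E3 → E3 := Function.invFun (gdef ζ)

/-!
Replacing `‖u‖ ^ 2` by `‖u‖ ^ 2 + ε` in the Riesz kernel `‖u‖ ^ (-3)` gives smooth kernels which,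
together with their gradients, converge in `L¹` on bounded sets of `ℝ⁵` as `ε → 0`. Against a
bounded density of bounded support the potentials and their gradients therefore converge locally
uniformly, so the limit potential `U` is `C¹`, with bounds that depend only on the sup norm and the
radius of the support of the density. Since `L⁻¹` multiplies `U` by `C₅ (x₁² + x₂²)`, the gradient
of `L⁻¹ h` is `O(‖x‖)`. This decay at the origin also makes up for `g_ζ` being merely Lipschitz
there: the composition `L⁻¹ h ∘ g_ζ` is still `C¹`, with vanishing gradient at the origin. Axial
symmetry and evenness of `L⁻¹ h` come from the invariance of the kernel under hyperplane reflections
of `ℝ⁵`.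
-/

open scoped Topology NNReal Convolution RealInnerProductSpace
open Function (support)
open ContinuousLinearMap (lsmul)

/-! ### Convolution of a bounded density with a locally integrable kernel -/

theorem locallyIntegrable_of_dominated {E F : Type*} [NormedAddCommGroup E] [MeasurableSpace E]
    [NormedAddCommGroup F] {μ : Measure E} {k : ℕ → E → F} {k₀ : E → F} {B : E → ℝ}
    (hk : ∀ n, AEStronglyMeasurable (k n) μ) (hB : LocallyIntegrable B μ)
    (hkB : ∀ n, ∀ᵐ u ∂μ, ‖k n u‖ ≤ B u)
    (hlim : ∀ᵐ u ∂μ, Tendsto (fun n => k n u) atTop (𝓝 (k₀ u))) : LocallyIntegrable k₀ μ := by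
  refine hB.mono (aestronglyMeasurable_of_tendsto_ae atTop hk hlim) ?_
  filter_upwards [hlim, ae_all_iff.2 hkB] with u hu hbound
  exact (le_of_tendsto hu.norm (Eventually.of_forall hbound)).trans (Real.le_norm_self _)

/-- A measurable function bounded by `A` and supported in the closed ball of radius `ρ` around the
origin: the class of densities whose potentials are studied here. -/
structure BoundedDensity {E : Type*} [NormedAddCommGroup E] [MeasurableSpace E] (A ρ : ℝ)
    (H : E → ℝ) : Prop where
  measurable : Measurable H
  abs_le : ∀ y, |H y| ≤ A
  support_subset : support H ⊆ closedBall 0 ρ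

namespace BoundedDensity

section Convolution

variable {E F : Type*} [NormedAddCommGroup E] [MeasurableSpace E] [NormedAddCommGroup F]
  [NormedSpace ℝ F] {μ : Measure E} {A ρ R : ℝ} {H : E → ℝ}

theorem eq_zero_of_lt (hH : BoundedDensity A ρ H) {y : E} (hy : ρ < ‖y‖) : H y = 0 := by
  by_contra h
  exact hy.not_ge (mem_closedBall_zero_iff.1 (hH.support_subset h))

theorem smul_indicator_sub (hH : BoundedDensity A ρ H) {w : E} (hw : ‖w‖ ≤ R) (k : E → F) (y : E) :
    H y • (closedBall 0 (R + ρ)).indicator k (w - y) = H y • k (w - y) := by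
  rcases lt_or_ge ρ ‖y‖ with hy | hy
  · simp only [hH.eq_zero_of_lt hy, zero_smul]
  · rw [indicator_of_mem]
    exact mem_closedBall_zero_iff.2 ((norm_sub_le w y).trans (add_le_add hw hy))

variable [ProperSpace E]

theorem integrable [IsFiniteMeasureOnCompacts μ]
    (hH : BoundedDensity A ρ H) : Integrable H μ :=
  (integrableOn_iff_integrable_of_support_subset hH.support_subset).1 <|
    .of_bound measure_closedBall_lt_top hH.measurable.aestronglyMeasurable A
      (Eventually.of_forall hH.abs_le)

section LocallyIntegrable

variable [BorelSpace E] [μ.IsAddLeftInvariant] [μ.IsNegInvariant] {k : E → F}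

theorem convolutionExists (hH : BoundedDensity A ρ H) (hk : LocallyIntegrable k μ) :
    ConvolutionExists H k (lsmul ℝ ℝ) μ := fun w => by
  have hk' : Integrable ((closedBall 0 (‖w‖ + ρ)).indicator k) μ :=
    (integrable_indicator_iff measurableSet_closedBall).2
      (hk.integrableOn_isCompact (isCompact_closedBall _ _))
  refine ((hk'.comp_sub_left w).bdd_smul A hH.measurable.aestronglyMeasurable
    (Eventually.of_forall hH.abs_le)).congr (Eventually.of_forall fun y => ?_)
  exact hH.smul_indicator_sub le_rfl k y

theorem norm_convolution_le (hH : BoundedDensity A ρ H) (hk : LocallyIntegrable k μ) {w : E}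
    (hw : ‖w‖ ≤ R) :
    ‖(H ⋆[lsmul ℝ ℝ, μ] k) w‖ ≤ A * ∫ u in closedBall 0 (R + ρ), ‖k u‖ ∂μ := by
  set B : Set E := closedBall 0 (R + ρ)
  have hkB : Integrable (B.indicator fun u => ‖k u‖) μ :=
    (integrable_indicator_iff measurableSet_closedBall).2
      (hk.integrableOn_isCompact (isCompact_closedBall _ _)).norm
  calc ‖(H ⋆[lsmul ℝ ℝ, μ] k) w‖
      ≤ ∫ y, A * B.indicator (fun u => ‖k u‖) (w - y) ∂μ := by
        refine norm_integral_le_of_norm_le ((hkB.comp_sub_left w).const_mul A)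
          (Eventually.of_forall fun y => ?_)
        rw [ContinuousLinearMap.lsmul_apply, ← hH.smul_indicator_sub hw, norm_smul,
          norm_indicator_eq_indicator_norm]
        exact mul_le_mul_of_nonneg_right (hH.abs_le y)
          (indicator_nonneg (fun _ _ => norm_nonneg _) _)
    _ = A * ∫ u in B, ‖k u‖ ∂μ := by
        rw [integral_const_mul, integral_sub_left_eq_self (B.indicator fun u => ‖k u‖),
          integral_indicator measurableSet_closedBall]

theorem tendstoUniformlyOn_convolution {ι : Type*} {l : Filter ι} (hH : BoundedDensity A ρ H)
    {K : ι → E → F} (hK : ∀ i, LocallyIntegrable (K i) μ) (hk : LocallyIntegrable k μ)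
    (hlim : Tendsto (fun i => ∫ u in closedBall 0 (R + ρ), ‖k u - K i u‖ ∂μ) l (𝓝 0)) :
    TendstoUniformlyOn (fun i => H ⋆[lsmul ℝ ℝ, μ] K i) (H ⋆[lsmul ℝ ℝ, μ] k) l
      (closedBall 0 R) := by
  rw [Metric.tendstoUniformlyOn_iff]
  intro ε hε
  have hlim' := hlim.const_mul A
  rw [mul_zero] at hlim'
  filter_upwards [hlim'.eventually_lt_const hε] with i hi w hw
  have hsub : (H ⋆[lsmul ℝ ℝ, μ] k) w - (H ⋆[lsmul ℝ ℝ, μ] K i) w =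
      (H ⋆[lsmul ℝ ℝ, μ] (k - K i)) w := by
    rw [convolution_def, convolution_def, ← integral_sub (hH.convolutionExists hk w)
      (hH.convolutionExists (hK i) w)]
    simp only [convolution_def, Pi.sub_apply, map_sub]
  rw [dist_eq_norm, hsub]
  exact (hH.norm_convolution_le (hk.sub (hK i)) (mem_closedBall_zero_iff.1 hw)).trans_lt hi

end LocallyIntegrable

section Smooth

variable {k : E → F}

theorem exists_integrable_bound [IsFiniteMeasureOnCompacts μ] (hH : BoundedDensity A ρ H)
    (hk : Continuous k) (w₀ : E) :
    ∃ b : E → ℝ, Integrable b μ ∧ ∀ y, ∀ w ∈ ball w₀ 1, ‖H y • k (w - y)‖ ≤ b y := by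
  obtain ⟨C, hC⟩ := (isCompact_closedBall (0 : E) (‖w₀‖ + 1 + ρ)).exists_bound_of_continuousOn
    hk.continuousOn
  refine ⟨fun y => |H y| * C, hH.integrable.abs.mul_const C, fun y w hw => ?_⟩
  rw [norm_smul, Real.norm_eq_abs]
  rcases lt_or_ge ρ ‖y‖ with hy | hy
  · simp only [hH.eq_zero_of_lt hy, abs_zero, zero_mul, le_refl]
  · refine mul_le_mul_of_nonneg_left (hC _ (mem_closedBall_zero_iff.2 ?_)) (abs_nonneg _)
    have hwy := norm_sub_le w y
    have hww₀ := norm_sub_norm_le w w₀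
    rw [mem_ball, dist_eq_norm] at hw
    linarith

variable [OpensMeasurableSpace E]

theorem aestronglyMeasurable_smul_comp_sub (hH : BoundedDensity A ρ H) (hk : Continuous k) (w : E) :
    AEStronglyMeasurable (fun y => H y • k (w - y)) μ :=
  hH.measurable.aestronglyMeasurable.smul
    (hk.comp (continuous_const.sub continuous_id)).aestronglyMeasurable

theorem continuous_convolution [IsFiniteMeasureOnCompacts μ] (hH : BoundedDensity A ρ H)
    (hk : Continuous k) :
    Continuous (H ⋆[lsmul ℝ ℝ, μ] k) := by
  refine continuous_iff_continuousAt.2 fun w₀ => ?_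
  obtain ⟨b, hb, hbound⟩ := hH.exists_integrable_bound (μ := μ) hk w₀
  refine continuousAt_of_dominated
    (Eventually.of_forall fun w => hH.aestronglyMeasurable_smul_comp_sub hk w) ?_ hb
    (Eventually.of_forall fun y => ?_)
  · filter_upwards [ball_mem_nhds w₀ one_pos] with w hw
    exact Eventually.of_forall fun y => hbound y w hw
  · exact ((hk.comp (continuous_id.sub continuous_const)).const_smul (H y)).continuousAt

theorem hasFDerivAt_convolution [NormedSpace ℝ E] [IsFiniteMeasureOnCompacts μ]
    (hH : BoundedDensity A ρ H) (hk : ContDiff ℝ 1 k) (w₀ : E) :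
    HasFDerivAt (H ⋆[lsmul ℝ ℝ, μ] k) ((H ⋆[lsmul ℝ ℝ, μ] fderiv ℝ k) w₀) w₀ := by
  have hk' : Continuous (fderiv ℝ k) := hk.continuous_fderiv one_ne_zero
  obtain ⟨b, hb, hbound⟩ := hH.exists_integrable_bound (μ := μ) hk.continuous w₀
  obtain ⟨b', hb', hbound'⟩ := hH.exists_integrable_bound (μ := μ) hk' w₀
  refine hasFDerivAt_integral_of_dominated_of_fderiv_le (ball_mem_nhds w₀ one_pos)
    (Eventually.of_forall fun w => hH.aestronglyMeasurable_smul_comp_sub hk.continuous w)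
    (hb.mono' (hH.aestronglyMeasurable_smul_comp_sub hk.continuous w₀)
      (Eventually.of_forall fun y => hbound y w₀ (mem_ball_self one_pos)))
    (hH.aestronglyMeasurable_smul_comp_sub hk' w₀) (Eventually.of_forall hbound') hb'
    (Eventually.of_forall fun y w _ => ?_)
  have hkw : HasFDerivAt k (fderiv ℝ k (w - y)) (w - y) :=
    (hk.differentiable one_ne_zero _).hasFDerivAt
  exact (hkw.comp w ((hasFDerivAt_id w).sub_const y)).const_smul (H y)

end Smooth

section DominatedLimit

variable {k : ℕ → E → F} {k₀ : E → F} {B : E → ℝ} [BorelSpace E] [μ.IsAddHaarMeasure]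

theorem tendstoUniformlyOn_convolution_of_dominated (hH : BoundedDensity A ρ H)
    (hk : ∀ n, AEStronglyMeasurable (k n) μ) (hB : LocallyIntegrable B μ)
    (hkB : ∀ n, ∀ᵐ u ∂μ, ‖k n u‖ ≤ B u)
    (hlim : ∀ᵐ u ∂μ, Tendsto (fun n => k n u) atTop (𝓝 (k₀ u))) (R : ℝ) :
    TendstoUniformlyOn (fun n => H ⋆[lsmul ℝ ℝ, μ] k n) (H ⋆[lsmul ℝ ℝ, μ] k₀) atTop
      (closedBall 0 R) := by
  have hk₀ : LocallyIntegrable k₀ μ := locallyIntegrable_of_dominated hk hB hkB hlim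
  have hkn (n : ℕ) : LocallyIntegrable (k n) μ :=
    hB.mono (hk n) ((hkB n).mono fun u hu => hu.trans (Real.le_norm_self _))
  refine hH.tendstoUniformlyOn_convolution hkn hk₀ ?_
  rw [← integral_zero E ℝ (μ := μ.restrict (closedBall 0 (R + ρ)))]
  have hK := isCompact_closedBall (0 : E) (R + ρ)
  refine tendsto_integral_of_dominated_convergence (fun u => ‖k₀ u‖ + B u)
    (fun n => (hk₀.aestronglyMeasurable.sub (hk n)).norm.restrict)
    ((hk₀.integrableOn_isCompact hK).norm.add (hB.integrableOn_isCompact hK)) (fun n => ?_) ?_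
  · filter_upwards [ae_restrict_of_ae (hkB n)] with u hu
    rw [norm_norm]
    exact (norm_sub_le _ _).trans (by gcongr)
  · filter_upwards [ae_restrict_of_ae hlim] with u hu
    simpa only [sub_self, norm_zero] using (hu.const_sub (k₀ u)).norm

variable [NormedSpace ℝ E] {k₀' : E → E →L[ℝ] F} {B' : E → ℝ}

theorem contDiff_convolution_of_dominated (hH : BoundedDensity A ρ H)
    (hk : ∀ n, ContDiff ℝ 1 (k n))
    (hB : LocallyIntegrable B μ) (hkB : ∀ n, ∀ᵐ u ∂μ, ‖k n u‖ ≤ B u)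
    (hlim : ∀ᵐ u ∂μ, Tendsto (fun n => k n u) atTop (𝓝 (k₀ u)))
    (hB' : LocallyIntegrable B' μ) (hkB' : ∀ n, ∀ᵐ u ∂μ, ‖fderiv ℝ (k n) u‖ ≤ B' u)
    (hlim' : ∀ᵐ u ∂μ, Tendsto (fun n => fderiv ℝ (k n) u) atTop (𝓝 (k₀' u))) :
    ContDiff ℝ 1 (H ⋆[lsmul ℝ ℝ, μ] k₀) ∧
      fderiv ℝ (H ⋆[lsmul ℝ ℝ, μ] k₀) = H ⋆[lsmul ℝ ℝ, μ] k₀' := by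
  have hk' (n : ℕ) : Continuous (fderiv ℝ (k n)) := (hk n).continuous_fderiv one_ne_zero
  have hunif (R : ℝ) := (hH.tendstoUniformlyOn_convolution_of_dominated
    (fun n => (hk n).continuous.aestronglyMeasurable) hB hkB hlim R).mono ball_subset_closedBall
  have hunif' (R : ℝ) := (hH.tendstoUniformlyOn_convolution_of_dominated
    (fun n => (hk' n).aestronglyMeasurable) hB' hkB' hlim' R).mono ball_subset_closedBall
  have hmem (w : E) : w ∈ ball (0 : E) (‖w‖ + 1) := mem_ball_zero_iff.2 (lt_add_one _)
  have hderiv (w : E) :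
      HasFDerivAt (H ⋆[lsmul ℝ ℝ, μ] k₀) ((H ⋆[lsmul ℝ ℝ, μ] k₀') w) w :=
    hasFDerivAt_of_tendstoUniformlyOn isOpen_ball (hunif' _)
      (fun n w _ => hH.hasFDerivAt_convolution (hk n) w)
      (fun w hw => (hunif _).tendsto_at hw) (hmem w)
  have hfderiv : fderiv ℝ (H ⋆[lsmul ℝ ℝ, μ] k₀) = H ⋆[lsmul ℝ ℝ, μ] k₀' :=
    funext fun w => (hderiv w).fderiv
  refine ⟨contDiff_one_iff_fderiv.2 ⟨fun w => (hderiv w).differentiableAt, ?_⟩, hfderiv⟩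
  rw [hfderiv]
  refine continuous_iff_continuousAt.2 fun w => ContinuousOn.continuousAt
    (s := ball 0 (‖w‖ + 1)) ?_ (isOpen_ball.mem_nhds (hmem w))
  exact (hunif' _).continuousOn
    (Eventually.of_forall fun n => (hH.continuous_convolution (hk' n)).continuousOn).frequently

end DominatedLimit

end Convolution

end BoundedDensity

/-! ### Riesz potentials -/

section Riesz

variable {E : Type*} [NormedAddCommGroup E] {s ε : ℝ}

/-- The Riesz kernel `‖u‖ ^ (-s)`, made smooth by replacing `‖u‖ ^ 2` with `‖u‖ ^ 2 + ε`; the kernel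
itself is the case `ε = 0`. -/
def rieszKernel (s ε : ℝ) (u : E) : ℝ := (‖u‖ ^ 2 + ε) ^ (-s / 2)

theorem rieszKernel_zero (s : ℝ) (u : E) : rieszKernel s 0 u = ‖u‖ ^ (-s) := by
  rw [rieszKernel, add_zero, ← Real.rpow_natCast, ← Real.rpow_mul (norm_nonneg u)]
  push_cast
  rw [mul_div_cancel₀ _ two_ne_zero]

theorem rpow_norm_sq_add_le {a : ℝ} (ha : a ≤ 0) (hε : 0 ≤ ε) {u : E} (hu : u ≠ 0) :
    (‖u‖ ^ 2 + ε) ^ a ≤ ‖u‖ ^ (2 * a) := by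
  have hu' : 0 < ‖u‖ := norm_pos_iff.2 hu
  rw [Real.rpow_mul hu'.le, Real.rpow_ofNat]
  exact Real.rpow_le_rpow_of_nonpos (by positivity) (le_add_of_nonneg_right hε) ha

theorem norm_rieszKernel_le (hs : 0 ≤ s) (hε : 0 ≤ ε) {u : E} (hu : u ≠ 0) :
    ‖rieszKernel s ε u‖ ≤ ‖u‖ ^ (-s) := by
  rw [rieszKernel, Real.norm_of_nonneg (by positivity)]
  convert rpow_norm_sq_add_le (by linarith : -s / 2 ≤ 0) hε hu using 2
  ring

theorem tendsto_rieszKernel {u : E} (hu : u ≠ 0) :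
    Tendsto (fun ε => rieszKernel s ε u) (𝓝 0) (𝓝 (rieszKernel s 0 u)) :=
  (tendsto_const_nhds.add tendsto_id).rpow_const (Or.inl (by simpa using hu))

variable [InnerProductSpace ℝ E]

/-- The derivative of `rieszKernel s ε`, away from the origin if `ε = 0`. -/
def rieszKernelDeriv (s ε : ℝ) (u : E) : E →L[ℝ] ℝ :=
  (-s * (‖u‖ ^ 2 + ε) ^ (-s / 2 - 1)) • innerSL ℝ u

theorem hasFDerivAt_rieszKernel (hε : 0 < ε) (u : E) :
    HasFDerivAt (rieszKernel s ε) (rieszKernelDeriv s ε u) u := by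
  have hsq : HasFDerivAt (fun u : E => ‖u‖ ^ 2 + ε) (2 • innerSL ℝ u) u :=
    (hasStrictFDerivAt_norm_sq u).hasFDerivAt.add_const ε
  refine (hsq.rpow_const (p := -s / 2) (Or.inl (by positivity))).congr_fderiv ?_
  rw [rieszKernelDeriv, ← Nat.cast_smul_eq_nsmul ℝ, smul_smul]
  push_cast
  ring_nf

theorem fderiv_rieszKernel (hε : 0 < ε) :
    fderiv ℝ (rieszKernel (E := E) s ε) = rieszKernelDeriv s ε :=
  funext fun u => (hasFDerivAt_rieszKernel hε u).fderiv

theorem contDiff_rieszKernel (hε : 0 < ε) : ContDiff ℝ 1 (rieszKernel (E := E) s ε) :=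
  ((contDiff_norm_sq ℝ).add contDiff_const).rpow_const_of_ne fun u => by positivity

theorem norm_rieszKernelDeriv_le (hs : 0 ≤ s) (hε : 0 ≤ ε) {u : E} (hu : u ≠ 0) :
    ‖rieszKernelDeriv s ε u‖ ≤ s * ‖u‖ ^ (-(s + 1)) := by
  have hu' : 0 < ‖u‖ := norm_pos_iff.2 hu
  calc ‖rieszKernelDeriv s ε u‖ = s * ((‖u‖ ^ 2 + ε) ^ (-s / 2 - 1) * ‖u‖) := by
        rw [rieszKernelDeriv, norm_smul, innerSL_apply_norm, norm_mul, norm_neg,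
          Real.norm_of_nonneg hs, Real.norm_of_nonneg (by positivity), mul_assoc]
    _ ≤ s * (‖u‖ ^ (2 * (-s / 2 - 1)) * ‖u‖) := by
        gcongr
        exact rpow_norm_sq_add_le (by linarith) hε hu
    _ = s * ‖u‖ ^ (-(s + 1)) := by
        rw [← Real.rpow_add_one hu'.ne']
        ring_nf

theorem tendsto_rieszKernelDeriv {u : E} (hu : u ≠ 0) :
    Tendsto (fun ε => rieszKernelDeriv s ε u) (𝓝 0) (𝓝 (rieszKernelDeriv s 0 u)) :=
  (((tendsto_const_nhds.add tendsto_id).rpow_const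
    (Or.inl (by simpa using hu))).const_mul (-s)).smul_const _

variable [FiniteDimensional ℝ E] [Nontrivial E] [MeasurableSpace E] [BorelSpace E] {μ : Measure E}
  [μ.IsAddHaarMeasure]

theorem locallyIntegrable_rieszKernel (hs : 0 ≤ s) (hsE : s < Module.finrank ℝ E) :
    LocallyIntegrable (rieszKernel s 0) μ := by
  refine locallyIntegrable_of_norm_le_rpow Module.finrank_pos hsE (C := 1) ?_ ?_
  · filter_upwards [Measure.ae_ne μ 0] with u hu
    rw [one_mul]
    exact norm_rieszKernel_le hs le_rfl hu
  · exact ((measurable_norm.pow_const 2).add_const 0).pow_const _ |>.aestronglyMeasurable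

theorem locallyIntegrable_rieszKernelDeriv (hs : 0 ≤ s) (hsE : s + 1 < Module.finrank ℝ E) :
    LocallyIntegrable (rieszKernelDeriv (E := E) s 0) μ := by
  refine locallyIntegrable_of_norm_le_rpow Module.finrank_pos hsE (C := s) ?_ ?_
  · filter_upwards [Measure.ae_ne μ 0] with u hu
    exact norm_rieszKernelDeriv_le hs le_rfl hu
  · exact ((((measurable_norm.pow_const 2).add_const 0).pow_const _).const_mul _
      ).aestronglyMeasurable.smul (innerSL ℝ).continuous.aestronglyMeasurable

theorem locallyIntegrable_const_mul_norm_rpow_neg (hsE : s < Module.finrank ℝ E) (c : ℝ) :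
    LocallyIntegrable (fun u : E => c * ‖u‖ ^ (-s)) μ :=
  locallyIntegrable_of_norm_le_rpow Module.finrank_pos hsE (C := |c|)
    (Eventually.of_forall fun u => by
      rw [norm_mul, Real.norm_eq_abs, Real.norm_of_nonneg (by positivity)])
    ((measurable_norm.pow_const _).const_mul c).aestronglyMeasurable

namespace BoundedDensity

variable {A ρ : ℝ} {H : E → ℝ}

theorem contDiff_convolution_rieszKernel (hH : BoundedDensity A ρ H) (hs : 0 ≤ s)
    (hsE : s + 1 < Module.finrank ℝ E) :
    ContDiff ℝ 1 (H ⋆[lsmul ℝ ℝ, μ] rieszKernel s 0) ∧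
      fderiv ℝ (H ⋆[lsmul ℝ ℝ, μ] rieszKernel s 0) = H ⋆[lsmul ℝ ℝ, μ] rieszKernelDeriv s 0 := by
  have hne : ∀ᵐ u : E ∂μ, u ≠ 0 := Measure.ae_ne μ 0
  have hpos (n : ℕ) : (0 : ℝ) < 1 / (n + 1) := by positivity
  have hzero := tendsto_one_div_add_atTop_nhds_zero_nat (𝕜 := ℝ)
  refine hH.contDiff_convolution_of_dominated (k := fun n : ℕ => rieszKernel s (1 / (n + 1)))
    (fun n => contDiff_rieszKernel (hpos n))
    (locallyIntegrable_const_mul_norm_rpow_neg (by linarith : s < _) 1)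
    (fun n => hne.mono fun u hu => ?_)
    (hne.mono fun u hu => (tendsto_rieszKernel hu).comp hzero)
    (locallyIntegrable_const_mul_norm_rpow_neg hsE s)
    (fun n => hne.mono fun u hu => ?_) (hne.mono fun u hu => ?_)
  · rw [one_mul]
    exact norm_rieszKernel_le hs (hpos n).le hu
  · rw [fderiv_rieszKernel (hpos n)]
    exact norm_rieszKernelDeriv_le hs (hpos n).le hu
  · simp only [fderiv_rieszKernel (hpos _)]
    exact (tendsto_rieszKernelDeriv hu).comp hzero

theorem exists_bound_convolution_rieszKernel (μ : Measure E) [μ.IsAddHaarMeasure] (A ρ R : ℝ)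
    (hs : 0 ≤ s) (hsE : s + 1 < Module.finrank ℝ E) :
    ∃ K, 0 ≤ K ∧ ∀ H : E → ℝ, BoundedDensity A ρ H → ∀ w, ‖w‖ ≤ R →
      ‖(H ⋆[lsmul ℝ ℝ, μ] rieszKernel s 0) w‖ ≤ K ∧
        ‖fderiv ℝ (H ⋆[lsmul ℝ ℝ, μ] rieszKernel s 0) w‖ ≤ K := by
  set B : Set E := closedBall 0 (R + ρ)
  set a := A * ∫ u in B, ‖rieszKernel s 0 u‖ ∂μ
  set b := A * ∫ u in B, ‖rieszKernelDeriv s 0 u‖ ∂μ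
  refine ⟨max 0 (max a b), le_max_left _ _, fun H hH w hw => ⟨?_, ?_⟩⟩
  · exact (hH.norm_convolution_le (locallyIntegrable_rieszKernel hs (by linarith)) hw).trans
      ((le_max_left a b).trans (le_max_right _ _))
  · rw [(hH.contDiff_convolution_rieszKernel hs hsE).2]
    exact (hH.norm_convolution_le (locallyIntegrable_rieszKernelDeriv hs hsE) hw).trans
      ((le_max_right a b).trans (le_max_right _ _))

end BoundedDensity

end Riesz

/-! ### Derivatives vanishing at a point -/

section Derivatives

variable {E F G : Type*} [NormedAddCommGroup E] [NormedSpace ℝ E] [NormedAddCommGroup F]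
  [NormedSpace ℝ F] [NormedAddCommGroup G] [NormedSpace ℝ G]

theorem norm_fderiv_mul_le_of_quadratic {q U : E → ℝ} {w : E} {c c' K R : ℝ}
    (hq : DifferentiableAt ℝ q w) (hU : DifferentiableAt ℝ U w) (hqw : ‖q w‖ ≤ c * ‖w‖ ^ 2)
    (hqw' : ‖fderiv ℝ q w‖ ≤ c' * ‖w‖) (hUw : ‖U w‖ ≤ K) (hUw' : ‖fderiv ℝ U w‖ ≤ K)
    (hc : 0 ≤ c) (hw : ‖w‖ ≤ R) :
    ‖fderiv ℝ (fun x => q x * U x) w‖ ≤ (c * R + c') * K * ‖w‖ := by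
  have hK : 0 ≤ K := (norm_nonneg _).trans hUw
  have hqw₁ : ‖q w‖ ≤ c * (R * ‖w‖) := hqw.trans (by rw [sq]; gcongr)
  calc ‖fderiv ℝ (fun x => q x * U x) w‖ = ‖q w • fderiv ℝ U w + U w • fderiv ℝ q w‖ := by
        rw [fderiv_fun_mul hq hU]
    _ ≤ ‖q w‖ * ‖fderiv ℝ U w‖ + ‖U w‖ * ‖fderiv ℝ q w‖ := by
        simpa only [norm_smul] using norm_add_le (q w • fderiv ℝ U w) (U w • fderiv ℝ q w)
    _ ≤ c * (R * ‖w‖) * K + K * (c' * ‖w‖) := by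
        gcongr
        exact (norm_nonneg _).trans hqw₁
    _ = (c * R + c') * K * ‖w‖ := by ring

variable {g : F → G} {e : E → F} {x₀ : E} {K : ℝ≥0}

theorem hasFDerivAt_comp_zero_of_lipschitzWith (he : LipschitzWith K e)
    (hg : HasFDerivAt g (0 : F →L[ℝ] G) (e x₀)) :
    HasFDerivAt (g ∘ e) (0 : E →L[ℝ] G) x₀ := by
  refine .of_isLittleO ?_
  simp only [_root_.zero_apply, sub_zero]
  have hg' := hg.isLittleO.comp_tendsto he.continuous.continuousAt
  simp only [_root_.zero_apply, sub_zero] at hg'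
  exact hg'.trans_isBigO (.of_bound K (Eventually.of_forall fun x => he.norm_sub_le x x₀))

theorem norm_fderiv_comp_le_of_lipschitzWith (hg : Differentiable ℝ g) (he : LipschitzWith K e)
    (hd : ∀ x, x ≠ x₀ → DifferentiableAt ℝ e x) (h₀ : fderiv ℝ g (e x₀) = 0) (x : E) :
    ‖fderiv ℝ (g ∘ e) x‖ ≤ ‖fderiv ℝ g (e x)‖ * K := by
  rcases eq_or_ne x x₀ with rfl | hx
  · rw [(hasFDerivAt_comp_zero_of_lipschitzWith he (h₀ ▸ (hg _).hasFDerivAt)).fderiv, norm_zero]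
    positivity
  · rw [fderiv_comp x (hg _) (hd x hx)]
    exact (ContinuousLinearMap.opNorm_comp_le _ _).trans
      (by gcongr; exact norm_fderiv_le_of_lipschitz ℝ he)

theorem contDiff_comp_of_lipschitzWith (hg : ContDiff ℝ 1 g) (he : LipschitzWith K e)
    (hd : ∀ x, x ≠ x₀ → ContDiffAt ℝ 1 e x) (h₀ : fderiv ℝ g (e x₀) = 0) :
    ContDiff ℝ 1 (g ∘ e) := by
  have hg' : Differentiable ℝ g := hg.differentiable one_ne_zero
  have hzero : HasFDerivAt (g ∘ e) (0 : E →L[ℝ] G) x₀ :=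
    hasFDerivAt_comp_zero_of_lipschitzWith he (h₀ ▸ (hg' _).hasFDerivAt)
  have hcomp {x : E} (hx : x ≠ x₀) : ContDiffAt ℝ 1 (g ∘ e) x := hg.contDiffAt.comp x (hd x hx)
  refine contDiff_one_iff_fderiv.2 ⟨fun x => ?_, continuous_iff_continuousAt.2 fun x => ?_⟩
  · rcases eq_or_ne x x₀ with rfl | hx
    exacts [hzero.differentiableAt, (hcomp hx).differentiableAt one_ne_zero]
  · rcases eq_or_ne x x₀ with rfl | hx
    · have hbound : Tendsto (fun y => ‖fderiv ℝ g (e y)‖ * K) (𝓝 x) (𝓝 0) := by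
        have := ((hg.continuous_fderiv one_ne_zero).comp he.continuous).norm.mul_const (K : ℝ)
        simpa [h₀] using this.tendsto x
      rw [ContinuousAt, hzero.fderiv]
      exact squeeze_zero_norm (norm_fderiv_comp_le_of_lipschitzWith hg' he
        (fun y hy => (hd y hy).differentiableAt one_ne_zero) h₀) hbound
    · exact (hcomp hx).continuousAt_fderiv one_ne_zero

end Derivatives

/-! ### Small radial deformations -/

section RadialShift

variable {E : Type*} [NormedAddCommGroup E] {δ : ℝ≥0}

theorem norm_sub_le_of_norm_fderiv_le_mul_norm [NormedSpace ℝ E] {F : Type*}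
    [NormedAddCommGroup F] [NormedSpace ℝ F] {ζ : E → F} (hζ : Differentiable ℝ ζ)
    (hζ' : ∀ x, ‖fderiv ℝ ζ x‖ ≤ δ * ‖x‖) {x y : E} (hxy : ‖y‖ ≤ ‖x‖) :
    ‖ζ x - ζ y‖ ≤ δ * ‖x‖ * ‖x - y‖ :=
  (convex_closedBall (0 : E) ‖x‖).norm_image_sub_le_of_norm_fderiv_le (𝕜 := ℝ)
    (fun z _ => hζ z)
    (fun z hz => (hζ' z).trans (by gcongr; exact mem_closedBall_zero_iff.1 hz))
    (mem_closedBall_zero_iff.2 hxy) (mem_closedBall_zero_iff.2 le_rfl)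

variable [InnerProductSpace ℝ E]

/-- The displacement `x ↦ ζ x / ‖x‖ ^ 2 • x` of the deformation `gdef ζ`; it vanishes at the
origin. -/
def radialShift (ζ : E → ℝ) (x : E) : E := (ζ x / ‖x‖ ^ 2) • x

theorem norm_radialShift_sub_le {ζ : E → ℝ} (hζ : Differentiable ℝ ζ) (hζ₀ : ζ 0 = 0)
    (hζ' : ∀ x, ‖fderiv ℝ ζ x‖ ≤ δ * ‖x‖) {x y : E} (hx : x ≠ 0) (hy : y ≠ 0)
    (hxy : ‖y‖ ≤ ‖x‖) : ‖radialShift ζ x - radialShift ζ y‖ ≤ 2 * δ * ‖x - y‖ := by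
  have hx' : 0 < ‖x‖ := norm_pos_iff.2 hx
  have hζxy := norm_sub_le_of_norm_fderiv_le_mul_norm hζ hζ' hxy
  have hζy : ‖ζ y‖ ≤ δ * ‖y‖ * ‖y‖ := by
    simpa [hζ₀] using norm_sub_le_of_norm_fderiv_le_mul_norm hζ hζ' (x := y) (y := 0) (by simp)
  have hinv := dist_div_norm_sq_smul hx hy 1
  rw [dist_eq_norm, dist_eq_norm] at hinv
  have hnorm : ‖(1 / ‖x‖) ^ 2 • x‖ = 1 / ‖x‖ := by
    rw [norm_smul, Real.norm_of_nonneg (by positivity)]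
    field_simp
  have hsplit : radialShift ζ x - radialShift ζ y = (ζ x - ζ y) • ((1 / ‖x‖) ^ 2 • x) +
      ζ y • ((1 / ‖x‖) ^ 2 • x - (1 / ‖y‖) ^ 2 • y) := by
    simp only [radialShift]
    module
  calc ‖radialShift ζ x - radialShift ζ y‖
      ≤ ‖ζ x - ζ y‖ * (1 / ‖x‖) + ‖ζ y‖ * (1 ^ 2 / (‖x‖ * ‖y‖) * ‖x - y‖) := by
        rw [hsplit]
        refine (norm_add_le _ _).trans_eq ?_
        rw [norm_smul (ζ x - ζ y), norm_smul (ζ y), hnorm, hinv]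
    _ ≤ δ * ‖x‖ * ‖x - y‖ * (1 / ‖x‖) +
        δ * ‖y‖ * ‖y‖ * (1 ^ 2 / (‖x‖ * ‖y‖) * ‖x - y‖) := by gcongr
    _ = δ * ‖x - y‖ * (1 + ‖y‖ / ‖x‖) := by field_simp
    _ ≤ δ * ‖x - y‖ * (1 + 1) := by
        gcongr
        exact (div_le_one hx').2 hxy
    _ = 2 * δ * ‖x - y‖ := by ring

theorem norm_radialShift_le {ζ : E → ℝ} (hζ : Differentiable ℝ ζ) (hζ₀ : ζ 0 = 0)
    (hζ' : ∀ x, ‖fderiv ℝ ζ x‖ ≤ δ * ‖x‖) (x : E) : ‖radialShift ζ x‖ ≤ δ * ‖x‖ := by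
  rcases eq_or_ne x 0 with rfl | hx
  · simp [radialShift]
  have hx' : 0 < ‖x‖ := norm_pos_iff.2 hx
  have hζx : ‖ζ x‖ ≤ δ * ‖x‖ * ‖x‖ := by
    simpa [hζ₀] using norm_sub_le_of_norm_fderiv_le_mul_norm hζ hζ' (x := x) (y := 0) (by simp)
  calc ‖radialShift ζ x‖ = ‖ζ x‖ / ‖x‖ := by
        rw [radialShift, norm_smul, norm_div, norm_pow, norm_norm]
        field_simp
    _ ≤ δ * ‖x‖ := (div_le_iff₀ hx').2 hζx

theorem lipschitzWith_radialShift {ζ : E → ℝ} (hζ : Differentiable ℝ ζ) (hζ₀ : ζ 0 = 0)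
    (hζ' : ∀ x, ‖fderiv ℝ ζ x‖ ≤ δ * ‖x‖) : LipschitzWith (2 * δ) (radialShift ζ) := by
  refine .of_dist_le_mul fun x y => ?_
  rw [dist_eq_norm, dist_eq_norm]
  push_cast
  have hle (z : E) : δ * ‖z‖ ≤ 2 * δ * ‖z‖ := by
    rw [mul_assoc]
    exact le_mul_of_one_le_left (by positivity) one_le_two
  rcases eq_or_ne x 0 with rfl | hx
  · simpa [radialShift] using (norm_radialShift_le hζ hζ₀ hζ' y).trans (hle y)
  rcases eq_or_ne y 0 with rfl | hy
  · simpa [radialShift] using (norm_radialShift_le hζ hζ₀ hζ' x).trans (hle x)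
  rcases le_total ‖y‖ ‖x‖ with hxy | hxy
  · exact norm_radialShift_sub_le hζ hζ₀ hζ' hx hy hxy
  · rw [norm_sub_rev, norm_sub_rev x]
    exact norm_radialShift_sub_le hζ hζ₀ hζ' hy hx hxy

end RadialShift

section Deformation

theorem gdef_eq_add_radialShift (ζ : E3 → ℝ) (x : E3) : gdef ζ x = x + radialShift ζ x := by
  rw [gdef, add_smul, one_smul, radialShift]

@[simp]
theorem gdef_zero (ζ : E3 → ℝ) : gdef ζ 0 = 0 := smul_zero _

namespace InXext

variable {δ : ℝ≥0} {ζ : E3 → ℝ}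

theorem lipschitzWith_radialShift (hζ : InXext δ ζ) : LipschitzWith (2 * δ) (radialShift ζ) :=
  _root_.lipschitzWith_radialShift (hζ.1.differentiable one_ne_zero) hζ.2.2.2.1 hζ.2.2.2.2

theorem lipschitzWith_gdef (hζ : InXext δ ζ) : LipschitzWith (1 + 2 * δ) (gdef ζ) := by
  rw [funext (gdef_eq_add_radialShift ζ)]
  exact LipschitzWith.id.add hζ.lipschitzWith_radialShift

theorem approximatesLinearOn_gdef (hζ : InXext δ ζ) :
    ApproximatesLinearOn (gdef ζ) (ContinuousLinearEquiv.refl ℝ E3 : E3 →L[ℝ] E3) univ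
      (2 * δ) := by
  have hsub : gdef ζ - ⇑(ContinuousLinearEquiv.refl ℝ E3 : E3 →L[ℝ] E3) = radialShift ζ :=
    funext fun x => sub_eq_of_eq_add' (gdef_eq_add_radialShift ζ x)
  refine LipschitzOnWith.approximatesLinearOn ?_
  rw [hsub]
  exact hζ.lipschitzWith_radialShift.lipschitzOnWith

theorem contDiffAt_gdef {δ : ℝ} (hζ : InXext δ ζ) {x : E3} (hx : x ≠ 0) :
    ContDiffAt ℝ 1 (gdef ζ) x :=
  (contDiffAt_const.add (hζ.1.contDiffAt.div (contDiff_norm_sq ℝ).contDiffAt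
    (pow_ne_zero _ (norm_ne_zero_iff.2 hx)))).smul contDiffAt_id

/-- The deformation `gdef ζ` as a homeomorphism, for `δ < 1 / 2`: it is then a perturbation of the
identity with Lipschitz constant less than one. -/
def homeomorph (hζ : InXext δ ζ) (hδ : δ < 1 / 2) : E3 ≃ₜ E3 :=
  hζ.approximatesLinearOn_gdef.toHomeomorph (gdef ζ) <| Or.inr <| by
    have hnorm : ‖((ContinuousLinearEquiv.refl ℝ E3).symm : E3 →L[ℝ] E3)‖₊ = 1 :=
      NNReal.eq ContinuousLinearMap.norm_id
    rw [hnorm, inv_one]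
    exact (lt_div_iff₀' two_pos).1 hδ

theorem bijective_gdef (hζ : InXext δ ζ) (hδ : δ < 1 / 2) : Function.Bijective (gdef ζ) :=
  (hζ.homeomorph hδ).bijective

theorem gdef_ginv (hζ : InXext δ ζ) (hδ : δ < 1 / 2) (z : E3) : gdef ζ (ginv ζ z) = z :=
  Function.invFun_eq ((hζ.bijective_gdef hδ).2 z)

theorem continuous_ginv (hζ : InXext δ ζ) (hδ : δ < 1 / 2) : Continuous (ginv ζ) := by
  have hsymm : ginv ζ = (hζ.homeomorph hδ).symm := funext fun z =>
    (hζ.bijective_gdef hδ).1 <|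
      (hζ.gdef_ginv hδ z).trans ((hζ.homeomorph hδ).apply_symm_apply z).symm
  rw [hsymm]
  exact (hζ.homeomorph hδ).symm.continuous

theorem norm_gdef_le (hζ : InXext δ ζ) (x : E3) : ‖gdef ζ x‖ ≤ (1 + 2 * δ) * ‖x‖ := by
  simpa using hζ.lipschitzWith_gdef.norm_sub_le x 0

end InXext

end Deformation

/-! ### Symmetries -/

section Coordinates

@[simp] theorem mk3_apply_zero (a b c : ℝ) : mk3 a b c 0 = a := rfl

@[simp] theorem mk3_apply_one (a b c : ℝ) : mk3 a b c 1 = b := rfl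

@[simp] theorem mk3_apply_two (a b c : ℝ) : mk3 a b c 2 = c := rfl

theorem cylRad_nonneg (x : E3) : 0 ≤ cylRad x := Real.sqrt_nonneg _

theorem cylRad_sq (x : E3) : cylRad x ^ 2 = x 0 ^ 2 + x 1 ^ 2 := Real.sq_sqrt (by positivity)

@[simp]
theorem cylRad_mk3_zero {r : ℝ} (hr : 0 ≤ r) (z : ℝ) : cylRad (mk3 r 0 z) = r := by
  simp [cylRad, hr]

@[simp]
theorem cylRad_smul (c : ℝ) (x : E3) : cylRad (c • x) = |c| * cylRad x := by
  rw [cylRad, cylRad, ← Real.sqrt_sq_eq_abs, ← Real.sqrt_mul (sq_nonneg c)]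
  simp only [PiLp.smul_apply, smul_eq_mul]
  ring_nf

theorem norm_eq_sqrt_cylRad (x : E3) : ‖x‖ = √(cylRad x ^ 2 + x 2 ^ 2) := by
  rw [EuclideanSpace.norm_eq, cylRad_sq]
  simp [Fin.sum_univ_three]

theorem reflect3_smul (c : ℝ) (x : E3) : reflect3 (c • x) = c • reflect3 x := by
  ext i
  fin_cases i <;> simp [reflect3, mk3]

theorem norm_reflect3 (x : E3) : ‖reflect3 x‖ = ‖x‖ := by
  simp [norm_eq_sqrt_cylRad, reflect3, cylRad]

/-- The map `emb` as a linear isometry. -/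
def embₗᵢ : E3 →ₗᵢ[ℝ] E5 where
  toFun := emb
  map_add' x y := by ext i; fin_cases i <;> simp [emb, mk5]
  map_smul' c x := by ext i; fin_cases i <;> simp [emb, mk5]
  norm_map' x := by
    simp [EuclideanSpace.norm_eq, Fin.sum_univ_three, Fin.sum_univ_five, emb, mk5]

theorem axisym_iff {f : E3 → ℝ} :
    Axisym f ↔ ∀ x y, cylRad x = cylRad y → x 2 = y 2 → f x = f y := by
  refine ⟨fun ⟨F, hF⟩ x y hr hz => by rw [hF, hF, hr, hz], fun h => ?_⟩
  exact ⟨fun r z => f (mk3 r 0 z), fun x =>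
    h _ _ (cylRad_mk3_zero (cylRad_nonneg x) _).symm rfl⟩

theorem Axisym.comp_gdef {f ζ : E3 → ℝ} (hf : Axisym f) (hζ : Axisym ζ) :
    Axisym fun x => f (gdef ζ x) := by
  refine axisym_iff.2 fun x y hr hz => axisym_iff.1 hf _ _ ?_ ?_
  all_goals
    simp only [gdef, norm_eq_sqrt_cylRad, axisym_iff.1 hζ x y hr hz, cylRad_smul, hr, hz,
      PiLp.smul_apply]

theorem gdef_reflect3 {ζ : E3 → ℝ} (hζ : EvenZ ζ) (x : E3) :
    gdef ζ (reflect3 x) = reflect3 (gdef ζ x) := by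
  rw [gdef, gdef, reflect3_smul, norm_reflect3, hζ]

theorem EvenZ.comp_gdef {f ζ : E3 → ℝ} (hf : EvenZ f) (hζ : EvenZ ζ) :
    EvenZ fun x => f (gdef ζ x) := fun x => by
  simp only [gdef_reflect3 hζ, hf (gdef ζ x)]

theorem EvenZ.comp_ginv {f ζ : E3 → ℝ} {δ : ℝ≥0} (hf : EvenZ f) (hζ : InXext δ ζ)
    (hδ : δ < 1 / 2) : EvenZ fun z => f (ginv ζ z) := fun z => by
  have hreflect : ginv ζ (reflect3 z) = reflect3 (ginv ζ z) := (hζ.bijective_gdef hδ).1 <| by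
    rw [hζ.gdef_ginv hδ, gdef_reflect3 hζ.2.2.1, hζ.gdef_ginv hδ]
  simp only [hreflect, hf (ginv ζ z)]

end Coordinates

section Reflection

theorem integral_norm_sub_mul_linearIsometryEquiv {E : Type*} [NormedAddCommGroup E]
    [InnerProductSpace ℝ E] [FiniteDimensional ℝ E] [MeasurableSpace E] [BorelSpace E]
    (R : E ≃ₗᵢ[ℝ] E) (κ : ℝ → ℝ) {H : E → ℝ} (hH : ∀ y, H (R y) = H y) (w : E) :
    ∫ y, κ ‖R w - y‖ * H y = ∫ y, κ ‖w - y‖ * H y := by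
  rw [← R.measurePreserving.integral_comp R.toHomeomorph.measurableEmbedding]
  simp only [hH, ← map_sub, R.norm_map]

theorem reflection_orthogonal_singleton_apply {ι : Type*} [Fintype ι] (v y : EuclideanSpace ℝ ι)
    (i : ι) :
    (Submodule.span ℝ {v})ᗮ.reflection y i = y i - 2 * (⟪v, y⟫ / ‖v‖ ^ 2) * v i := by
  rw [Submodule.reflection_orthogonal_apply, Submodule.reflection_singleton_apply]
  simp only [PiLp.neg_apply, PiLp.sub_apply, PiLp.smul_apply, smul_eq_mul,
    RCLike.ofReal_real_eq_id, id_eq]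
  ring

theorem tilde_congr (f : E3 → ℝ) {y y' : E5} (hnorm : ‖y‖ = ‖y'‖) (h : y 4 = y' 4) :
    tilde f y = tilde f y' := by
  have hsum : ‖y‖ ^ 2 = ‖y'‖ ^ 2 := by rw [hnorm]
  simp only [EuclideanSpace.norm_sq_eq, Fin.sum_univ_five, Real.norm_eq_abs, sq_abs, h,
    add_left_inj] at hsum
  rw [tilde, tilde, hsum, h]

theorem Linv_apply (C₅ : ℝ) (f : E3 → ℝ) (x : E3) :
    Linv C₅ f x = C₅ * cylRad x ^ 2 * ∫ y : E5, (‖emb x - y‖ ^ 3)⁻¹ * tilde f y := by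
  rw [cylRad_sq, Linv]

theorem axisym_Linv (C₅ : ℝ) (f : E3 → ℝ) : Axisym (Linv C₅ f) := by
  refine axisym_iff.2 fun a b hr hz => ?_
  have hnorm : ‖emb a‖ = ‖emb b‖ := by
    change ‖embₗᵢ a‖ = ‖embₗᵢ b‖
    rw [embₗᵢ.norm_map, embₗᵢ.norm_map, norm_eq_sqrt_cylRad, norm_eq_sqrt_cylRad, hr, hz]
  rw [Linv_apply, Linv_apply, hr, ← Submodule.reflection_sub hnorm]
  congr 1
  refine (integral_norm_sub_mul_linearIsometryEquiv _ (fun t => (t ^ 3)⁻¹) (fun y => ?_) _).symm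
  refine tilde_congr f (LinearIsometryEquiv.norm_map _ y) ?_
  have haxis : (emb a - emb b) 4 = 0 := by simp [emb, mk5, hz]
  rw [reflection_orthogonal_singleton_apply, haxis, mul_zero, sub_zero]

theorem evenZ_Linv (C₅ : ℝ) {f : E3 → ℝ} (hf : EvenZ f) : EvenZ (Linv C₅ f) := fun a => by
  set R := (Submodule.span ℝ {(EuclideanSpace.single 4 1 : E5)})ᗮ.reflection
  have hR (y : E5) : R y = mk5 (y 0) (y 1) (y 2) (y 3) (-y 4) := by
    ext i
    rw [reflection_orthogonal_singleton_apply]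
    fin_cases i <;> simp [mk5, EuclideanSpace.inner_single_left]
    ring
  have hemb : emb (reflect3 a) = R (emb a) := by rw [hR]; rfl
  rw [Linv, Linv, hemb]
  congr 1
  refine integral_norm_sub_mul_linearIsometryEquiv R (fun t => (t ^ 3)⁻¹) (fun y => ?_) _
  rw [hR]
  exact hf (mk3 √(y 0 ^ 2 + y 1 ^ 2 + y 2 ^ 2 + y 3 ^ 2) 0 (y 4))

end Reflection

/-! ### The operator `L⁻¹` -/

section Potential

theorem norm_mk3_sqrt (y : E5) : ‖mk3 √(y 0 ^ 2 + y 1 ^ 2 + y 2 ^ 2 + y 3 ^ 2) 0 (y 4)‖ = ‖y‖ := by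
  rw [norm_eq_sqrt_cylRad, cylRad_mk3_zero (Real.sqrt_nonneg _), Real.sq_sqrt (by positivity),
    EuclideanSpace.norm_eq]
  simp [Fin.sum_univ_five]

theorem boundedDensity_tilde {A ρ : ℝ} {f : E3 → ℝ} (hf : BoundedDensity A ρ f) :
    BoundedDensity A ρ (tilde f) where
  measurable := hf.measurable.comp <| Continuous.measurable <|
    (PiLp.continuous_toLp 2 _).comp <| continuous_pi fun i => by
      fin_cases i <;> dsimp <;> fun_prop
  abs_le _ := hf.abs_le _
  support_subset y hy := by
    rw [mem_closedBall_zero_iff, ← norm_mk3_sqrt]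
    exact mem_closedBall_zero_iff.1 (hf.support_subset hy)

theorem Linv_eq_convolution (C₅ : ℝ) (f : E3 → ℝ) :
    Linv C₅ f = fun x => C₅ * (x 0 ^ 2 + x 1 ^ 2) *
      ((tilde f ⋆[lsmul ℝ ℝ, volume] rieszKernel 3 0) ∘ embₗᵢ) x := by
  funext x
  simp only [Linv, Function.comp_apply, convolution_def, ContinuousLinearMap.lsmul_apply,
    smul_eq_mul, rieszKernel_zero]
  congr 2 with y
  rw [mul_comm, Real.rpow_neg (norm_nonneg _), Real.rpow_ofNat]
  rfl

theorem contDiff_const_mul_sq_add_sq (c : ℝ) :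
    ContDiff ℝ 1 fun x : E3 => c * (x 0 ^ 2 + x 1 ^ 2) := by
  fun_prop

theorem norm_const_mul_sq_add_sq_le (c : ℝ) (x : E3) :
    ‖c * (x 0 ^ 2 + x 1 ^ 2)‖ ≤ ‖c‖ * ‖x‖ ^ 2 := by
  rw [norm_mul, Real.norm_of_nonneg (add_nonneg (sq_nonneg _) (sq_nonneg _)),
    EuclideanSpace.real_norm_sq_eq, Fin.sum_univ_three]
  exact mul_le_mul_of_nonneg_left (le_add_of_nonneg_right (sq_nonneg (x 2))) (norm_nonneg c)

theorem norm_fderiv_const_mul_sq_add_sq_le (c : ℝ) (x : E3) :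
    ‖fderiv ℝ (fun x : E3 => c * (x 0 ^ 2 + x 1 ^ 2)) x‖ ≤ 4 * ‖c‖ * ‖x‖ := by
  have hcoord (i : Fin 3) : HasFDerivAt (fun x : E3 => x i)
      (EuclideanSpace.proj i : E3 →L[ℝ] ℝ) x :=
    (EuclideanSpace.proj i : E3 →L[ℝ] ℝ).hasFDerivAt
  rw [((((hcoord 0).pow 2).fun_add ((hcoord 1).pow 2)).const_mul c).fderiv]
  refine ContinuousLinearMap.opNorm_le_bound _ (by positivity) fun v => ?_
  have h (i : Fin 3) : ‖x i * v i‖ ≤ ‖x‖ * ‖v‖ := by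
    rw [norm_mul]
    gcongr <;> exact PiLp.norm_apply_le _ i
  calc _ = ‖c * (2 * (x 0 * v 0 + x 1 * v 1))‖ := by
        congr 1
        simp
        ring
    _ = ‖c‖ * (2 * ‖x 0 * v 0 + x 1 * v 1‖) := by rw [norm_mul, norm_mul, Real.norm_two]
    _ ≤ ‖c‖ * (2 * (‖x‖ * ‖v‖ + ‖x‖ * ‖v‖)) := by
        gcongr
        exact norm_add_le_of_le (h 0) (h 1)
    _ = 4 * ‖c‖ * ‖x‖ * ‖v‖ := by ring

theorem three_add_one_lt_finrank : (3 : ℝ) + 1 < Module.finrank ℝ E5 := by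
  rw [finrank_euclideanSpace_fin]
  norm_num

theorem contDiff_Linv {A ρ : ℝ} {f : E3 → ℝ} (hf : BoundedDensity A ρ f) (C₅ : ℝ) :
    ContDiff ℝ 1 (Linv C₅ f) := by
  rw [Linv_eq_convolution]
  exact (contDiff_const_mul_sq_add_sq C₅).mul
    (((boundedDensity_tilde hf).contDiff_convolution_rieszKernel zero_le_three
      three_add_one_lt_finrank).1.comp embₗᵢ.contDiff)

theorem exists_norm_fderiv_Linv_le (C₅ A ρ R : ℝ) :
    ∃ K, 0 ≤ K ∧ ∀ f : E3 → ℝ, BoundedDensity A ρ f → ∀ x, ‖x‖ ≤ R →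
      ‖fderiv ℝ (Linv C₅ f) x‖ ≤ K * ‖x‖ := by
  obtain ⟨K, hK, hbound⟩ := BoundedDensity.exists_bound_convolution_rieszKernel
    (volume : Measure E5) A ρ R zero_le_three three_add_one_lt_finrank
  refine ⟨(‖C₅‖ * |R| + 4 * ‖C₅‖) * K, by positivity, fun f hf x hx => ?_⟩
  set U : E5 → ℝ := tilde f ⋆[lsmul ℝ ℝ, volume] rieszKernel 3 0
  have hU : Differentiable ℝ U := ((boundedDensity_tilde hf).contDiff_convolution_rieszKernel
    zero_le_three three_add_one_lt_finrank).1.differentiable one_ne_zero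
  obtain ⟨hUx, hUx'⟩ := hbound _ (boundedDensity_tilde hf) (embₗᵢ x) (by rwa [embₗᵢ.norm_map])
  have hemb : Differentiable ℝ embₗᵢ := embₗᵢ.contDiff.differentiable one_ne_zero
  have hUemb : ‖fderiv ℝ (U ∘ embₗᵢ) x‖ ≤ K := by
    rw [fderiv_comp x (hU _) (hemb x)]
    calc _ ≤ ‖fderiv ℝ U (embₗᵢ x)‖ * ‖fderiv ℝ embₗᵢ x‖ :=
          ContinuousLinearMap.opNorm_comp_le _ _
      _ ≤ K * 1 := by
          gcongr
          exact norm_fderiv_le_of_lipschitz ℝ embₗᵢ.lipschitz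
      _ = K := mul_one K
  rw [Linv_eq_convolution]
  exact norm_fderiv_mul_le_of_quadratic
    ((contDiff_const_mul_sq_add_sq C₅).differentiable one_ne_zero x)
    (hU.comp hemb x)
    (norm_const_mul_sq_add_sq_le C₅ x) (norm_fderiv_const_mul_sq_add_sq_le C₅ x) hUx hUemb
    (norm_nonneg _) (hx.trans (le_abs_self R))

end Potential

/-! ### The space `X` -/

section SpaceX

theorem inX_and_xnormLe_of_norm_fderiv_le {f : E3 → ℝ} {C : ℝ} (hf : ContDiff ℝ 1 f)
    (haxi : Axisym f) (heven : EvenZ f) (hf₀ : f 0 = 0)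
    (hC : ∀ x, ‖x‖ ≤ 1 → ‖fderiv ℝ f x‖ ≤ C * ‖x‖) : InX f ∧ XnormLe f C := by
  have hX : XnormLe f C := fun x hx => by
    have huniq : UniqueDiffOn ℝ (closedBall (0 : E3) 1) :=
      uniqueDiffOn_convex (convex_closedBall _ _) <| by
        rw [interior_closedBall _ one_ne_zero]
        exact nonempty_ball.2 one_pos
    rw [gradB, (hf.differentiable one_ne_zero x).fderivWithin (huniq x hx)]
    exact hC x (mem_closedBall_zero_iff.1 hx)
  obtain ⟨F, hF⟩ := haxi
  exact ⟨⟨hf.contDiffOn, ⟨F, fun x _ => hF x⟩, fun x _ => heven x, hf₀, C, hX⟩, hX⟩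

theorem InX.abs_le {φ : E3 → ℝ} {N : ℝ} (hφ : InX φ) (hN : XnormLe φ N) {x : E3}
    (hx : x ∈ closedBall 0 1) : |φ x| ≤ |N| := by
  have hx' : ‖x‖ ≤ 1 := mem_closedBall_zero_iff.1 hx
  have hgrad (z : E3) (hz : z ∈ closedBall 0 1) :
      ‖fderivWithin ℝ φ (closedBall 0 1) z‖ ≤ |N| * 1 := by
    refine (hN z hz).trans ?_
    gcongr
    exacts [le_abs_self N, mem_closedBall_zero_iff.1 hz]
  have hmean := (convex_closedBall (0 : E3) 1).norm_image_sub_le_of_norm_fderivWithin_le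
    (hφ.1.differentiableOn one_ne_zero) hgrad (mem_closedBall_self zero_le_one) hx
  rw [hφ.2.2.2.1, sub_zero, sub_zero, mul_one] at hmean
  exact hmean.trans (mul_le_of_le_one_right (abs_nonneg N) hx')

theorem BoundedDensity.mul_of_continuousOn {E : Type*} [NormedAddCommGroup E] [MeasurableSpace E]
    [BorelSpace E] {A K ρ : ℝ} {H g : E → ℝ} (hH : BoundedDensity A ρ H)
    (hg : ContinuousOn g (closedBall 0 ρ)) (hK : 0 ≤ K) (hgK : ∀ x ∈ closedBall 0 ρ, |g x| ≤ K) :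
    BoundedDensity (A * K) ρ fun x => H x * g x where
  measurable := by
    classical
    have hind : (fun x => H x * g x) = fun x => H x * (closedBall 0 ρ).piecewise g 0 x := by
      funext x
      by_cases hx : x ∈ closedBall 0 ρ
      · rw [piecewise_eq_of_mem _ _ _ hx]
      · rw [Function.notMem_support.1 (mt (@hH.support_subset x) hx), zero_mul, zero_mul]
    rw [hind]
    exact hH.measurable.mul
      (hg.measurable_piecewise continuousOn_const measurableSet_closedBall)
  abs_le x := by
    have hA : 0 ≤ A := (abs_nonneg _).trans (hH.abs_le x)
    rw [abs_mul]
    by_cases hx : x ∈ closedBall 0 ρ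
    · exact mul_le_mul (hH.abs_le x) (hgK x hx) (abs_nonneg _) hA
    · rw [Function.notMem_support.1 (mt (@hH.support_subset x) hx), abs_zero, zero_mul]
      positivity
  support_subset := (Function.support_mul_subset_left _ _).trans hH.support_subset

theorem BoundedDensity.comp_ginv {A ρ : ℝ} {δ : ℝ≥0} {ζ h : E3 → ℝ} (hh : BoundedDensity A ρ h)
    (hζ : InXext δ ζ) (hδ : δ < 1 / 2) :
    BoundedDensity A ((1 + 2 * δ) * ρ) fun z => h (ginv ζ z) where
  measurable := hh.measurable.comp (hζ.continuous_ginv hδ).measurable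
  abs_le _ := hh.abs_le _
  support_subset z hz := mem_closedBall_zero_iff.2 <| by
    calc ‖z‖ = ‖gdef ζ (ginv ζ z)‖ := by rw [hζ.gdef_ginv hδ]
      _ ≤ (1 + 2 * δ) * ‖ginv ζ z‖ := hζ.norm_gdef_le _
      _ ≤ (1 + 2 * δ) * ρ := by
        gcongr
        exact mem_closedBall_zero_iff.1 (hh.support_subset hz)

theorem exists_inX_Linv_comp_gdef (C₅ A ρ : ℝ) (δ : ℝ≥0) :
    ∃ C, 0 < C ∧ ∀ f : E3 → ℝ, BoundedDensity A ρ f → EvenZ f → ∀ ζ, InXext δ ζ →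
      InX (fun x => Linv C₅ f (gdef ζ x)) ∧ XnormLe (fun x => Linv C₅ f (gdef ζ x)) C := by
  obtain ⟨K, hK, hbound⟩ := exists_norm_fderiv_Linv_le C₅ A ρ (1 + 2 * δ)
  have hL : 0 ≤ (1 + 2 * δ : ℝ) := by positivity
  refine ⟨K * (1 + 2 * δ) ^ 2 + 1, by positivity, fun f hf heven ζ hζ => ?_⟩
  have hLinv : ContDiff ℝ 1 (Linv C₅ f) := contDiff_Linv hf C₅
  have hzero : fderiv ℝ (Linv C₅ f) (gdef ζ 0) = 0 := by
    simpa using hbound f hf (gdef ζ 0) (by simpa using hL)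
  refine inX_and_xnormLe_of_norm_fderiv_le (contDiff_comp_of_lipschitzWith hLinv
    hζ.lipschitzWith_gdef (fun x => hζ.contDiffAt_gdef) hzero)
    ((axisym_Linv C₅ f).comp_gdef hζ.2.1) ((evenZ_Linv C₅ heven).comp_gdef hζ.2.2.1)
    (by simp [Linv]) fun x hx => ?_
  have hgx : ‖gdef ζ x‖ ≤ 1 + 2 * δ :=
    (hζ.norm_gdef_le x).trans (mul_le_of_le_one_right hL hx)
  calc ‖fderiv ℝ (Linv C₅ f ∘ gdef ζ) x‖
      ≤ ‖fderiv ℝ (Linv C₅ f) (gdef ζ x)‖ * (1 + 2 * δ : ℝ≥0) :=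
        norm_fderiv_comp_le_of_lipschitzWith (hLinv.differentiable one_ne_zero)
          hζ.lipschitzWith_gdef (fun y hy => (hζ.contDiffAt_gdef hy).differentiableAt one_ne_zero)
          hzero x
    _ ≤ K * ((1 + 2 * δ) * ‖x‖) * (1 + 2 * δ : ℝ≥0) := by
        gcongr
        exact (hbound f hf _ hgx).trans (by gcongr; exact hζ.norm_gdef_le x)
    _ = K * (1 + 2 * δ) ^ 2 * ‖x‖ := by
        push_cast
        ring
    _ ≤ (K * (1 + 2 * δ) ^ 2 + 1) * ‖x‖ := by
        gcongr
        exact le_add_of_nonneg_right zero_le_one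

theorem evenZ_mul_of_support_subset {ρ₀ g : E3 → ℝ} (hρ₀ : EvenZ ρ₀)
    (hsupp : support ρ₀ ⊆ closedBall 0 1) (hg : ∀ x ∈ closedBall (0 : E3) 1, g (reflect3 x) = g x) :
    EvenZ fun x => ρ₀ x * g x := fun x => by
  simp only [hρ₀ x]
  by_cases hx : x ∈ closedBall 0 1
  · rw [hg x hx]
  · rw [Function.notMem_support.1 (mt (@hsupp x) hx), zero_mul, zero_mul]

theorem F3_maps_into_X_general {δ : ℝ≥0} (hδ : δ < 1 / 2) (C₅ : ℝ) {k : ℝ → ℝ} (hk : Continuous k)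
    (M N : ℝ) :
    ∃ C : ℝ, 0 < C ∧
      ∀ ρ₀ : E3 → ℝ, Measurable ρ₀ → (∀ x, |ρ₀ x| ≤ M) → EvenZ ρ₀ →
        support ρ₀ ⊆ closedBall (0 : E3) 1 →
        ∀ ζ : E3 → ℝ, InXext δ ζ → ∀ φ : E3 → ℝ, InX φ → XnormLe φ N →
          InX (fun x => Linv C₅ (fun z => ρ₀ (ginv ζ z) * k (φ (ginv ζ z))) (gdef ζ x)) ∧
          XnormLe (fun x => Linv C₅ (fun z => ρ₀ (ginv ζ z) * k (φ (ginv ζ z))) (gdef ζ x)) C := by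
  obtain ⟨K, hK⟩ := (isCompact_Icc (a := -|N|) (b := |N|)).exists_bound_of_continuousOn
    hk.continuousOn
  have hK₀ : 0 ≤ K := (norm_nonneg _).trans (hK 0 (by simp))
  obtain ⟨C, hC, hF₃⟩ := exists_inX_Linv_comp_gdef C₅ (M * K) ((1 + 2 * δ) * 1) δ
  refine ⟨C, hC, fun ρ₀ hmeas hM heven hsupp ζ hζ φ hφ hN => ?_⟩
  have hdensity : BoundedDensity (M * K) 1 fun x => ρ₀ x * k (φ x) :=
    (BoundedDensity.mk hmeas hM hsupp).mul_of_continuousOn (hk.comp_continuousOn hφ.1.continuousOn)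
      hK₀ fun x hx => hK _ (abs_le.1 (hφ.abs_le hN hx))
  have heven' : EvenZ fun x => ρ₀ x * k (φ x) :=
    evenZ_mul_of_support_subset heven hsupp fun x hx => by rw [hφ.2.2.1 x hx]
  exact hF₃ _ (hdensity.comp_ginv hζ hδ) (heven'.comp_ginv hζ hδ) ζ hζ

end SpaceX

/-- for δ sufficiently small, ζ, φ ∈ X_δ, ρ₀ bounded measurable
axisymmetric even in x₃ and supported in B̄₁, and k ∈ C²(ℝ), the function
F₃(ζ,φ)(x) = L⁻¹[(ρ₀∘g_ζ⁻¹)(k∘φ∘g_ζ⁻¹)](g_ζ(x)) belongs to X, with ‖F₃(ζ,φ)‖_X ≤ C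
for a constant C depending only on ‖ρ₀‖_{L∞}, k and δ. -/
theorem F3_maps_into_X :
    ∃ δ : ℝ, 0 < δ ∧
      ∀ C₅ : ℝ, 0 < C₅ →
        ∀ k : ℝ → ℝ, ContDiff ℝ 2 k →
          ∀ M : ℝ, 0 < M →
            ∃ C : ℝ, 0 < C ∧
              ∀ ρ₀ : E3 → ℝ, Measurable ρ₀ → (∀ x, |ρ₀ x| ≤ M) →
                Axisym ρ₀ → EvenZ ρ₀ → Function.support ρ₀ ⊆ closedBall (0:E3) 1 →
                ∀ ζ : E3 → ℝ, InXext δ ζ →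
                  ∀ φ : E3 → ℝ, InX φ → XnormLe φ δ →
                    InX (fun x => Linv C₅
                          (fun z => ρ₀ (ginv ζ z) * k (φ (ginv ζ z))) (gdef ζ x)) ∧
                    XnormLe (fun x => Linv C₅
                          (fun z => ρ₀ (ginv ζ z) * k (φ (ginv ζ z))) (gdef ζ x)) C := by
  refine ⟨(1 / 4 : ℝ≥0), by positivity, fun C₅ _ k hk M _ => ?_⟩
  obtain ⟨C, hC, h⟩ := F3_maps_into_X_general (δ := 1 / 4)
    (NNReal.coe_lt_coe.1 (by norm_num)) C₅ hk.continuous M (1 / 4 : ℝ≥0)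
  exact ⟨C, hC, fun ρ₀ hmeas hM _ heven hsupp => h ρ₀ hmeas hM heven hsupp⟩
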